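/- Let $w : \mathbb{R} \to \mathbb{R}$ be Lipschitz continuous, supported in $[0,1]$, with $\int_0^1 w(t)^2\, dt = 1$. Then the functional $I = \frac{1}{2}\int_0^\infty u^2\, |\widehat{w}(u)|^2\, du$ satisfies $I \ge \frac{\pi^3}{2}$. -/

import Mathlib

open MeasureTheory Set Real

/-- The Fourier transform with the convention
`ŵ(ω) = ∫ w(t) e^{-iωt} dt` used in the paper. -/
noncomputable def fourierTr (w : ℝ → ℝ) (ω : ℝ) : ℂ :=
  ∫ t : ℝ, (w t : ℂ) * Complex.exp (-(Complex.I * ω * t))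

open Topology Filter

noncomputable def fOn (f : ℝ → ℝ) (u : ℝ) : ℂ :=
  ∫ t in (0:ℝ)..1, (f t : ℂ) * Complex.exp (-(Complex.I * u * t))

lemma parseval_shift (f : ℝ → ℝ) (K : ℝ) (hm : Measurable f) (hb : ∀ x, |f x| ≤ K) (s : ℝ) :
    HasSum (fun n : ℤ => ‖fOn f (s + n * (2 * π))‖ ^ 2) (∫ t in (0:ℝ)..1, f t ^ 2) := by
  have hn : ∀ x : ℝ, ‖(f x : ℂ) * Complex.exp (-(Complex.I * s * x))‖ = |f x| := by
    intro x
    rw [norm_mul, show -(Complex.I * s * x) = ((-(s * x) : ℝ) : ℂ) * Complex.I by push_cast; ring,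
      Complex.norm_exp_ofReal_mul_I]
    simp
  have hL : MemLp (fun x : ℝ => (f x : ℂ) * Complex.exp (-(Complex.I * s * x))) 2
      (volume.restrict (Ioc (0:ℝ) 1)) := by
    refine MemLp.of_bound ?_ K ?_
    · apply Measurable.aestronglyMeasurable
      fun_prop
    · exact Filter.Eventually.of_forall fun x => by rw [hn]; exact hb x
  have h := hasSum_sq_fourierCoeffOn (zero_lt_one) hL
  simp only [hn, sq_abs, sub_zero, inv_one, one_smul] at h
  convert h using 4 with n
  rw [fourierCoeffOn_eq_integral, fOn]
  simp only [sub_zero, div_one, one_smul]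
  apply intervalIntegral.integral_congr
  intro x _
  simp only [fourier_coe_apply, smul_eq_mul]
  rw [mul_left_comm (Complex.exp _) (f x : ℂ), ← Complex.exp_add]
  congr 2
  push_cast
  ring

lemma fOn_deriv (w : ℝ → ℝ) (K : NNReal) (hw : LipschitzWith K w) (h0 : w 0 = 0) (h1 : w 1 = 0)
    (u : ℝ) : fOn (deriv w) u = Complex.I * u * fOn w u := by
  have hac : AbsolutelyContinuousOnInterval w 0 1 :=
    (hw.lipschitzOnWith (s := _)).absolutelyContinuousOnInterval
  have hc : AbsolutelyContinuousOnInterval (fun t => Real.cos (u * t)) 0 1 :=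
    ContDiffOn.absolutelyContinuousOnInterval (by fun_prop)
  have hs : AbsolutelyContinuousOnInterval (fun t => Real.sin (u * t)) 0 1 :=
    ContDiffOn.absolutelyContinuousOnInterval (by fun_prop)
  have e1 := hc.integral_mul_deriv_eq_deriv_mul hac
  have e2 := hs.integral_mul_deriv_eq_deriv_mul hac
  have d1 : ∀ t, deriv (fun t => Real.cos (u * t)) t = -(u * Real.sin (u * t)) := by
    intro t
    have := ((hasDerivAt_id t).const_mul u).cos.deriv
    simpa [mul_comm] using this
  have d2 : ∀ t, deriv (fun t => Real.sin (u * t)) t = u * Real.cos (u * t) := by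
    intro t
    have := ((hasDerivAt_id t).const_mul u).sin.deriv
    simpa [mul_comm] using this
  simp only [d1, d2, h0, h1, mul_zero, sub_zero, zero_sub] at e1 e2
  have key : ∀ f : ℝ → ℝ, IntervalIntegrable f volume 0 1 → fOn f u =
      ((∫ t in (0:ℝ)..1, Real.cos (u * t) * f t : ℝ) : ℂ) -
      ((∫ t in (0:ℝ)..1, Real.sin (u * t) * f t : ℝ) : ℂ) * Complex.I := by
    intro f hf
    rw [← intervalIntegral.integral_ofReal, ← intervalIntegral.integral_ofReal,
      ← intervalIntegral.integral_mul_const, ← intervalIntegral.integral_sub, fOn]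
    · apply intervalIntegral.integral_congr
      intro t _
      simp only
      rw [show -(Complex.I * u * t) = ((-(u * t) : ℝ) : ℂ) * Complex.I by push_cast; ring,
        Complex.exp_mul_I, ← Complex.ofReal_cos, ← Complex.ofReal_sin, Real.cos_neg, Real.sin_neg]
      push_cast
      ring
    · have : IntervalIntegrable (fun t => Real.cos (u * t) * f t) volume 0 1 :=
        hf.continuousOn_mul (by fun_prop)
      exact ⟨Integrable.ofReal this.1, Integrable.ofReal this.2⟩
    · have : IntervalIntegrable (fun t => Real.sin (u * t) * f t) volume 0 1 :=
        hf.continuousOn_mul (by fun_prop)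
      exact IntervalIntegrable.mul_const ⟨Integrable.ofReal this.1, Integrable.ofReal this.2⟩ _
  rw [key _ hac.intervalIntegrable_deriv, key _ (hw.continuous.intervalIntegrable _ _), e1, e2]
  have e3 : ∫ t in (0:ℝ)..1, -(u * Real.sin (u * t)) * w t
      = - (u * ∫ t in (0:ℝ)..1, Real.sin (u * t) * w t) := by
    rw [← intervalIntegral.integral_const_mul, ← intervalIntegral.integral_neg]
    congr 1; ext t; ring
  have e4 : ∫ t in (0:ℝ)..1, (u * Real.cos (u * t)) * w t
      = (u * ∫ t in (0:ℝ)..1, Real.cos (u * t) * w t) := by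
    rw [← intervalIntegral.integral_const_mul]
    congr 1; ext t; ring
  rw [e3, e4]
  push_cast
  linear_combination ((u:ℂ) * ((∫ t in (0:ℝ)..1, Real.sin (u * t) * w t : ℝ) : ℂ)) * Complex.I_sq

lemma lint_shift (H : ℝ → ℝ) (C : ℝ) (hH : Continuous H) (h0 : ∀ x, 0 ≤ H x)
    (hs : ∀ s, HasSum (fun n : ℤ => H (s + n * (2 * π))) C) :
    ∫⁻ x, ENNReal.ofReal (H x) = ENNReal.ofReal (C * (2 * π)) := by
  have hT : 0 < 2 * π := by positivity
  have hm : Measurable fun x => ENNReal.ofReal (H x) := hH.measurable.ennreal_ofReal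
  rw [← setLIntegral_univ, ← iUnion_Ioc_add_zsmul hT 0, lintegral_iUnion
    (fun _ => measurableSet_Ioc) (pairwise_disjoint_Ioc_add_zsmul 0 (2 * π))]
  have e : ∀ n : ℤ, ∫⁻ x in Ioc (0 + n • (2 * π)) (0 + (n + 1) • (2 * π)), ENNReal.ofReal (H x)
      = ∫⁻ x in Ioc 0 (2 * π), ENNReal.ofReal (H (x + n * (2 * π))) := by
    intro n
    have := (measurePreserving_add_right volume ((n:ℝ) * (2 * π))).setLIntegral_comp_preimage
      (s := Ioc (0 + n • (2 * π)) (0 + (n + 1) • (2 * π))) measurableSet_Ioc hm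
    rw [← this]
    congr 2
    ext x
    simp only [mem_preimage, mem_Ioc, zsmul_eq_mul]
    push_cast
    constructor <;> rintro ⟨a, b⟩ <;> constructor <;> linarith
  simp only [e]
  rw [← lintegral_tsum (fun n => by fun_prop)]
  have : ∀ x, ∑' n : ℤ, ENNReal.ofReal (H (x + n * (2 * π))) = ENNReal.ofReal C := by
    intro x
    rw [← ENNReal.ofReal_tsum_of_nonneg (fun n => h0 _) (hs x).summable, (hs x).tsum_eq]
  simp only [this, lintegral_const, Measure.restrict_apply_univ, Real.volume_Ioc, sub_zero]
  rw [ENNReal.ofReal_mul' hT.le]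

lemma fOn_neg (w : ℝ → ℝ) (u : ℝ) : ‖fOn w (-u)‖ = ‖fOn w u‖ := by
  have : fOn w (-u) = (starRingEnd ℂ) (fOn w u) := by
    rw [fOn, fOn, intervalIntegral.integral_of_le zero_le_one,
      intervalIntegral.integral_of_le zero_le_one, ← integral_conj]
    congr 1
    ext t
    simp [← Complex.exp_conj]
  rw [this, Complex.norm_conj]

theorem I_lower_bound
    (w : ℝ → ℝ) (K : NNReal) (hw : LipschitzWith K w)
    (hsupp : Function.support w ⊆ Icc (0:ℝ) 1)
    (hnorm : (∫ t in (0:ℝ)..1, w t ^ 2) = 1) :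
    (1 / 2) * (∫ u in Ioi (0:ℝ), u ^ 2 * ‖fourierTr w u‖ ^ 2) ≥ π ^ 3 / 2 := by
  have hz : ∀ x, x ∉ Icc (0:ℝ) 1 → w x = 0 := fun x hx => by
    by_contra h; exact hx (hsupp h)
  have h0 : w 0 = 0 := by
    have hcl : IsClosed {x | w x = 0} := isClosed_eq hw.continuous continuous_const
    have : closure (Iio (0:ℝ)) ⊆ {x | w x = 0} :=
      hcl.closure_subset_iff.2 fun x hx => hz x fun h => not_lt.2 h.1 hx
    rw [closure_Iio] at this
    exact this (mem_Iic.2 le_rfl)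
  have h1 : w 1 = 0 := by
    have hcl : IsClosed {x | w x = 0} := isClosed_eq hw.continuous continuous_const
    have : closure (Ioi (1:ℝ)) ⊆ {x | w x = 0} :=
      hcl.closure_subset_iff.2 fun x hx => hz x fun h => not_lt.2 h.2 hx
    rw [closure_Ioi] at this
    exact this (mem_Ici.2 le_rfl)
  have hF : ∀ u, fourierTr w u = fOn w u := by
    intro u
    rw [fourierTr, fOn, intervalIntegral.integral_of_le zero_le_one, ← integral_Icc_eq_integral_Ioc,
      setIntegral_eq_integral_of_forall_compl_eq_zero]
    intro x hx
    simp [hz x hx]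
  simp only [hF]
  obtain ⟨M, hM⟩ : ∃ M, ∀ x, |w x| ≤ M := by
    obtain ⟨M, hM⟩ := isCompact_Icc.exists_bound_of_continuousOn (s := Icc (0:ℝ) 1)
      hw.continuous.continuousOn
    refine ⟨M, fun x => ?_⟩
    by_cases hx : x ∈ Icc (0:ℝ) 1
    · exact hM x hx
    · rw [hz x hx, abs_zero]
      exact (norm_nonneg _).trans (hM 0 (by simp))
  set C := ∫ t in (0:ℝ)..1, (deriv w t) ^ 2 with hC
  have hd : ∀ u, ‖fOn (deriv w) u‖ ^ 2 = u ^ 2 * ‖fOn w u‖ ^ 2 := by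
    intro u
    rw [fOn_deriv w K hw h0 h1, norm_mul, norm_mul, mul_pow, mul_pow]
    simp
  have hP := parseval_shift (deriv w) K (measurable_deriv w)
    (fun x => norm_deriv_le_of_lipschitz hw)
  simp only [hd] at hP
  have hQ := parseval_shift w M hw.continuous.measurable hM
  rw [hnorm] at hQ
  have hCge : π ^ 2 ≤ C := by
    have a := (hQ π).mul_left (π ^ 2)
    rw [mul_one] at a
    refine hasSum_le (fun n => ?_) a (hP π)
    apply mul_le_mul_of_nonneg_right _ (sq_nonneg _)
    have : (1:ℝ) ≤ (1 + 2 * n) ^ 2 := by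
      have : (1:ℤ) ≤ (1 + 2 * n) ^ 2 := by
        have : 0 < (1 + 2 * n) ^ 2 := by
          have : (1 + 2 * n) ≠ 0 := by omega
          positivity
        linarith
      exact_mod_cast this
    nlinarith [mul_le_mul_of_nonneg_left this (sq_nonneg π)]
  have hcont : Continuous fun u : ℝ => u ^ 2 * ‖fOn w u‖ ^ 2 := by
    have : Continuous fun u : ℝ => fOn w u := by
      unfold fOn
      apply intervalIntegral.continuous_parametric_intervalIntegral_of_continuous'
      have := hw.continuous
      unfold Function.uncurry
      fun_prop
    fun_prop
  have hl := lint_shift _ C hcont (fun x => by positivity) hP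
  have hI : ∫ u, u ^ 2 * ‖fOn w u‖ ^ 2 = C * (2 * π) := by
    rw [integral_eq_lintegral_of_nonneg_ae (Eventually.of_forall fun x => by positivity)
      hcont.aestronglyMeasurable, hl, ENNReal.toReal_ofReal]
    have : 0 ≤ C := (sq_nonneg _).trans hCge
    positivity
  have habs : ∫ u, u ^ 2 * ‖fOn w u‖ ^ 2 = 2 * ∫ u in Ioi (0:ℝ), u ^ 2 * ‖fOn w u‖ ^ 2 := by
    rw [← integral_comp_abs (f := fun u : ℝ => u ^ 2 * ‖fOn w u‖ ^ 2)]
    congr 1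
    ext u
    rcases abs_choice u with h | h <;> simp [h, fOn_neg]
  nlinarith [mul_le_mul_of_nonneg_right hCge pi_pos.le]
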